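/- arXiv:2602.05304 — 2 statements merged into one kernel-verified Lean document; each statement's English description precedes it below -/
import Mathlib

section
/- (SAG, non-convex case, high probability.) Fix K ≥ 1, δ ∈ (0,1), let τ = ⌈(8N/3)·log(NK/δ)⌉, set α = 1/(16 L τ), and assume K ≥ 2τ. Then, with probability at least 1 − δ over the i.i.d. uniform sampling, the SAG iterates satisfy (1/(K − τ)) · Σ_{k=τ}^{K−1} ‖∇f(x_k)‖² ≤ 768 L² B² τ / K. -/
open Finset in
lemma sag_count (N K τ : ℕ) (hN : 1 ≤ N) (s : ℕ) (hs : s + τ ≤ K) (i : Fin N) :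
    ((univ.filter (fun ω : Fin K → Fin N =>
      ∀ j : Fin K, s ≤ j.1 → j.1 < s + τ → ω j ≠ i)).card : ℝ)
      = (1 - 1 / (N : ℝ)) ^ τ * (N : ℝ) ^ K := by
  classical
  have hN0 : (N : ℝ) ≠ 0 := by positivity
  have e : (univ.filter (fun ω : Fin K → Fin N =>
      ∀ j : Fin K, s ≤ j.1 → j.1 < s + τ → ω j ≠ i))
      = Fintype.piFinset (fun j : Fin K =>
        if s ≤ j.1 ∧ j.1 < s + τ then univ.erase i else univ) := by
    ext ω
    simp only [mem_filter, mem_univ, true_and, Fintype.mem_piFinset]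
    refine forall_congr' fun j => ?_
    by_cases h1 : s ≤ j.1 <;> by_cases h2 : j.1 < s + τ <;> simp [h1, h2]
  rw [e, Fintype.card_piFinset]
  push_cast
  have e2 : ∀ j : Fin K, (((if s ≤ j.1 ∧ j.1 < s + τ then univ.erase i else univ :
      Finset (Fin N)).card : ℕ) : ℝ)
      = (if s ≤ j.1 ∧ j.1 < s + τ then (1 - 1 / (N : ℝ)) else 1) * N := by
    intro j
    split_ifs
    · rw [card_erase_of_mem (mem_univ _), card_univ, Fintype.card_fin, Nat.cast_sub hN]
      field_simp
      simp
    · simp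
  rw [prod_congr rfl (fun j _ => e2 j), prod_mul_distrib]
  congr 1
  · rw [prod_ite]
    simp only [prod_const, one_pow, mul_one]
    congr 1
    have : (univ.filter (fun j : Fin K => s ≤ j.1 ∧ j.1 < s + τ)).map Fin.valEmbedding
        = Ico s (s + τ) := by
      ext a
      simp only [mem_map, mem_filter, mem_univ, true_and, Fin.valEmbedding_apply, mem_Ico]
      constructor
      · rintro ⟨j, hj, rfl⟩; exact hj
      · intro ha; exact ⟨⟨a, by omega⟩, ha, rfl⟩
    rw [← card_map Fin.valEmbedding, this]; simp
  · simp

open Finset in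
open Classical in
lemma sag_prob (N K τ : ℕ) (hN : 1 ≤ N) (hK : 1 ≤ K) (δ : ℝ) (hδ0 : 0 < δ) (hδ1 : δ < 1)
    (hτ : τ = ⌈(8 * (N : ℝ) / 3) * Real.log ((N : ℝ) * K / δ)⌉₊)
    (P : (Fin K → Fin N) → Prop)
    (hP : ∀ ω, (∀ s, s < K → s + τ ≤ K → ∀ i, ∃ j : Fin K, s ≤ j.1 ∧ j.1 < s + τ ∧ ω j = i) → P ω) :
    1 - δ ≤ ((univ.filter P).card : ℝ) / (N : ℝ) ^ K := by
  have hNr : (1 : ℝ) ≤ N := by exact_mod_cast hN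
  have hKr : (1 : ℝ) ≤ K := by exact_mod_cast hK
  have hNK : (0 : ℝ) < (N : ℝ) ^ K := by positivity
  rw [le_div_iff₀ hNK]
  let S : Finset (ℕ × Fin N) := ((range K).filter (fun s => s + τ ≤ K)) ×ˢ univ
  let Bd : ℕ × Fin N → Finset (Fin K → Fin N) := fun p =>
    univ.filter (fun ω => ∀ j : Fin K, p.1 ≤ j.1 → j.1 < p.1 + τ → ω j ≠ p.2)
  have hsub : univ.filter (fun ω => ¬ P ω) ⊆ S.biUnion Bd := by
    intro ω hω
    simp only [mem_filter, mem_univ, true_and] at hω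
    by_contra hc
    apply hω
    apply hP
    intro s hsK hs i
    by_contra hne
    apply hc
    simp only [mem_biUnion]
    refine ⟨(s, i), by simp [S, hsK, hs], ?_⟩
    simp only [Bd, mem_filter, mem_univ, true_and]
    intro j h1 h2 h3
    exact hne ⟨j, h1, h2, h3⟩
  have hc1 : ((univ.filter (fun ω => ¬ P ω)).card : ℝ)
      ≤ K * N * ((1 - 1 / (N : ℝ)) ^ τ * (N : ℝ) ^ K) := by
    have h1 : ((univ.filter (fun ω => ¬ P ω)).card : ℝ) ≤ ∑ p ∈ S, ((Bd p).card : ℝ) := by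
      exact_mod_cast (card_le_card hsub).trans card_biUnion_le
    refine h1.trans ?_
    have h2 : ∀ p ∈ S, ((Bd p).card : ℝ) = (1 - 1 / (N : ℝ)) ^ τ * (N : ℝ) ^ K := by
      intro p hp
      simp only [S, mem_product, mem_filter] at hp
      have := sag_count N K τ hN p.1 hp.1.2 p.2
      rw [← this]
    rw [sum_congr rfl h2, sum_const, nsmul_eq_mul]
    have h3 : (S.card : ℝ) ≤ K * N := by
      have : S.card ≤ K * N := by
        simp only [S, card_product, card_univ, Fintype.card_fin]
        exact Nat.mul_le_mul_right _ ((card_filter_le _ _).trans (by simp))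
      exact_mod_cast this
    have h4 : 0 ≤ 1 - 1 / (N : ℝ) := by
      rw [sub_nonneg, div_le_one (by positivity)]; exact hNr
    gcongr
  have hlog : 0 ≤ Real.log ((N : ℝ) * K / δ) := by
    apply Real.log_nonneg
    rw [le_div_iff₀ hδ0]; nlinarith
  have hpow : (1 - 1 / (N : ℝ)) ^ τ ≤ δ / (N * K) := by
    have h4 : 0 ≤ 1 - 1 / (N : ℝ) := by
      rw [sub_nonneg, div_le_one (by positivity)]; exact hNr
    have h5 : 1 - 1 / (N : ℝ) ≤ Real.exp (-(1 / N)) := Real.one_sub_le_exp_neg _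
    calc (1 - 1 / (N : ℝ)) ^ τ ≤ (Real.exp (-(1 / N))) ^ τ := by gcongr
      _ = Real.exp (-(τ / N)) := by rw [← Real.exp_nat_mul]; congr 1; ring
      _ ≤ Real.exp (-(Real.log ((N : ℝ) * K / δ))) := by
        apply Real.exp_le_exp.2
        apply neg_le_neg
        rw [le_div_iff₀ (by positivity)]
        have := Nat.le_ceil ((8 * (N : ℝ) / 3) * Real.log ((N : ℝ) * K / δ))
        rw [← hτ] at this
        nlinarith [mul_nonneg (by positivity : (0:ℝ) ≤ N) hlog]
      _ = δ / (N * K) := by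
        rw [Real.exp_neg, Real.exp_log (by positivity), inv_div]
  have hc2 : ((univ.filter (fun ω => ¬ P ω)).card : ℝ) ≤ δ * (N : ℝ) ^ K := by
    refine hc1.trans ?_
    calc (K * N * ((1 - 1 / (N : ℝ)) ^ τ * (N : ℝ) ^ K))
        ≤ K * N * (δ / (N * K) * (N : ℝ) ^ K) := by gcongr
      _ = δ * (N : ℝ) ^ K := by field_simp
  have hsum : ((univ.filter P).card : ℝ) + ((univ.filter (fun ω => ¬ P ω)).card : ℝ)
      = (N : ℝ) ^ K := by
    have := card_filter_add_card_filter_not (s := (univ : Finset (Fin K → Fin N))) P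
    rw [card_univ, Fintype.card_fun, Fintype.card_fin, Fintype.card_fin] at this
    exact_mod_cast this
  linarith

section
variable {E : Type*} [NormedAddCommGroup E] [InnerProductSpace ℝ E] [CompleteSpace E]

lemma sag_grad_inner (F : E → ℝ) (x v : E) : inner ℝ (gradient F x) v = fderiv ℝ F x v := by
  simp [gradient]

lemma sag_descent (F : E → ℝ) (hF : Differentiable ℝ F) (L : ℝ) (hL : 0 < L)
    (hs : ∀ x y, ‖gradient F x - gradient F y‖ ≤ L * ‖x - y‖) (x y : E) :
    F y ≤ F x + inner ℝ (gradient F x) (y - x) + L * ‖y - x‖ ^ 2 := by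
  have hb : ∀ z ∈ Metric.closedBall x ‖y - x‖, ‖fderiv ℝ F z - fderiv ℝ F x‖ ≤ L * ‖y - x‖ := by
    intro z hz
    have h1 := hs z x
    rw [gradient, gradient, ← map_sub, LinearIsometryEquiv.norm_map] at h1
    rw [Metric.mem_closedBall, dist_eq_norm] at hz
    exact h1.trans (by gcongr)
  have h := (convex_closedBall x ‖y - x‖).norm_image_sub_le_of_norm_fderiv_le'
    (𝕜 := ℝ) (f := F) (φ := fderiv ℝ F x) (C := L * ‖y - x‖) (x := x) (y := y)
    (fun z _ => hF z) hb (Metric.mem_closedBall_self (norm_nonneg _))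
    (by rw [Metric.mem_closedBall, dist_eq_norm])
  rw [sag_grad_inner]
  have := (le_abs_self _).trans h
  nlinarith

lemma sag_grad_min (F : E → ℝ) (a : E) (ha : ∀ y, F a ≤ F y) : gradient F a = 0 := by
  have : IsLocalMin F a := Filter.Eventually.of_forall ha
  simp [gradient, this.fderiv_eq_zero]

lemma sag_grad_avg {N : ℕ} (fi : Fin N → E → ℝ) (hd : ∀ i, Differentiable ℝ (fi i)) (f : E → ℝ)
    (hf : ∀ z, f z = (∑ i, fi i z) / N) (x : E) :
    gradient f x = (N : ℝ)⁻¹ • ∑ i, gradient (fi i) x := by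
  have h1 : HasFDerivAt f ((N : ℝ)⁻¹ • ∑ i, fderiv ℝ (fi i) x) x := by
    have h2 : HasFDerivAt (fun z => (N : ℝ)⁻¹ • ∑ i, fi i z) ((N : ℝ)⁻¹ • ∑ i, fderiv ℝ (fi i) x) x :=
      (HasFDerivAt.fun_sum (fun i _ => (hd i x).hasFDerivAt)).fun_const_smul _
    convert h2 using 1
    funext z
    rw [hf, smul_eq_mul]; ring
  simp only [gradient, h1.fderiv, map_smul, map_sum]

lemma sag_double (τ K : ℕ) (a : ℕ → ℝ) (ha : ∀ j, 0 ≤ a j) :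
    ∑ k ∈ Finset.Ico τ K, ∑ j ∈ Finset.Ico (k + 1 - τ) k, a j ≤ τ * ∑ j ∈ Finset.range K, a j := by
  calc _ = ∑ j ∈ Finset.range K, ∑ k ∈ (Finset.Ico τ K).filter (fun k => k + 1 - τ ≤ j ∧ j < k), a j := by
        apply Finset.sum_comm'
        intro k j
        simp only [Finset.mem_Ico, Finset.mem_filter, Finset.mem_range]
        omega
    _ ≤ ∑ j ∈ Finset.range K, (τ : ℝ) * a j := by
        apply Finset.sum_le_sum
        intro j _
        rw [Finset.sum_const, nsmul_eq_mul]
        apply mul_le_mul_of_nonneg_right _ (ha j)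
        have : ((Finset.Ico τ K).filter (fun k => k + 1 - τ ≤ j ∧ j < k)) ⊆ Finset.Ico j (j + τ) := by
          intro k
          simp only [Finset.mem_Ico, Finset.mem_filter]
          omega
        have h2 := Finset.card_le_card this
        rw [Nat.card_Ico, Nat.add_sub_cancel_left] at h2
        exact_mod_cast h2
    _ = _ := by rw [Finset.mul_sum]

lemma sag_telescope (a : ℕ → ℝ) {m n : ℕ} (h : m ≤ n) :
    ∑ k ∈ Finset.Ico m n, (a k - a (k + 1)) = a m - a n := by
  induction n, h using Nat.le_induction with
  | base => simp
  | succ n hn ih => rw [Finset.sum_Ico_succ_top hn, ih]; ring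

/-- Core deterministic estimate. -/
lemma sag_core (f : E → ℝ) (hfd : Differentiable ℝ f) (L : ℝ) (hL : 0 < L)
    (hs : ∀ x y, ‖gradient f x - gradient f y‖ ≤ L * ‖x - y‖)
    (xstar : E) (hmin : ∀ y, f xstar ≤ f y) (B : ℝ) (hB : ‖xstar‖ ≤ B)
    (K τ : ℕ) (hτ : 1 ≤ τ) (hK : 2 * τ ≤ K) (α : ℝ) (hα : α = 1 / (16 * L * τ))
    (x g : ℕ → E) (hx : ∀ k < K, x (k + 1) = x k - α • g k)
    (hg0 : ∀ k < τ, ‖g k‖ ≤ 16 / 15 * (L * B)) (hxτ : ‖x τ‖ ≤ B / 15)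
    (herr : ∀ k, τ ≤ k → k < K →
      ‖g k - gradient f (x k)‖ ≤ L * (α * ∑ j ∈ Finset.Ico (k + 1 - τ) k, ‖g j‖)) :
    ∑ k ∈ Finset.Ico τ K, ‖gradient f (x k)‖ ^ 2 ≤ 384 * L ^ 2 * B ^ 2 * τ := by
  have hτr : (1 : ℝ) ≤ τ := by exact_mod_cast hτ
  have hα0 : 0 < α := by rw [hα]; positivity
  have hLα : L * α * τ = 1 / 16 := by rw [hα]; field_simp
  have hB0 : 0 ≤ B := (norm_nonneg _).trans hB
  have hLα1 : L * α ≤ 1 / 16 := by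
    have : 0 < L * α := by positivity
    nlinarith
  -- squared error
  have hsq : ∀ k, τ ≤ k → k < K → ‖g k - gradient f (x k)‖ ^ 2
      ≤ (L * α) ^ 2 * τ * ∑ j ∈ Finset.Ico (k + 1 - τ) k, ‖g j‖ ^ 2 := by
    intro k h1 h2
    have h3 := herr k h1 h2
    have h4 : (∑ j ∈ Finset.Ico (k + 1 - τ) k, ‖g j‖) ^ 2
        ≤ τ * ∑ j ∈ Finset.Ico (k + 1 - τ) k, ‖g j‖ ^ 2 := by
      refine sq_sum_le_card_mul_sum_sq.trans ?_
      have : ((Finset.Ico (k + 1 - τ) k).card : ℝ) ≤ τ := by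
        have : (Finset.Ico (k + 1 - τ) k).card ≤ τ := by simp; omega
        exact_mod_cast this
      gcongr
    calc ‖g k - gradient f (x k)‖ ^ 2
        ≤ (L * (α * ∑ j ∈ Finset.Ico (k + 1 - τ) k, ‖g j‖)) ^ 2 := by gcongr
      _ = (L * α) ^ 2 * (∑ j ∈ Finset.Ico (k + 1 - τ) k, ‖g j‖) ^ 2 := by ring
      _ ≤ (L * α) ^ 2 * (τ * ∑ j ∈ Finset.Ico (k + 1 - τ) k, ‖g j‖ ^ 2) := by gcongr
      _ = _ := by ring
  have hstep : ∀ k ∈ Finset.Ico τ K, ‖gradient f (x k)‖ ^ 2 ≤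
      2 / α * (f (x k) - f (x (k + 1))) - 7 / 8 * ‖g k‖ ^ 2
        + (L * α) ^ 2 * τ * ∑ j ∈ Finset.Ico (k + 1 - τ) k, ‖g j‖ ^ 2 := by
    intro k hk
    rw [Finset.mem_Ico] at hk
    have h1 := hsq k hk.1 hk.2
    have h2 := sag_descent f hfd L hL hs (x k) (x (k + 1))
    have h3 : x (k + 1) - x k = -(α • g k) := by rw [hx k hk.2]; abel
    rw [h3, inner_neg_right, inner_smul_right, norm_neg, norm_smul, Real.norm_eq_abs,
      abs_of_pos hα0] at h2
    rw [@norm_sub_sq_real, real_inner_comm] at h1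
    have h4 : 2 * inner ℝ (gradient f (x k)) (g k)
        ≤ 2 / α * (f (x k) - f (x (k + 1))) + 2 * (L * α) * ‖g k‖ ^ 2 := by
      have : 2 / α * (f (x k) - f (x (k + 1))) + 2 * (L * α) * ‖g k‖ ^ 2
        - 2 * inner ℝ (gradient f (x k)) (g k)
        = 2 / α * (f (x k) + -(α * inner ℝ (gradient f (x k)) (g k)) + L * (α * ‖g k‖) ^ 2
          - f (x (k + 1))) := by
        field_simp
        ring
      have h5 : 0 ≤ 2 / α * (f (x k) + -(α * inner ℝ (gradient f (x k)) (g k)) + L * (α * ‖g k‖) ^ 2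
          - f (x (k + 1))) := mul_nonneg (by positivity) (by linarith)
      linarith
    have h6 : 2 * (L * α) * ‖g k‖ ^ 2 ≤ 1 / 8 * ‖g k‖ ^ 2 := by
      apply mul_le_mul_of_nonneg_right _ (by positivity)
      linarith
    linarith
  have hsum := Finset.sum_le_sum hstep
  rw [Finset.sum_add_distrib, Finset.sum_sub_distrib, ← Finset.mul_sum, ← Finset.mul_sum,
    ← Finset.mul_sum, sag_telescope (fun k => f (x k)) (by omega : τ ≤ K)] at hsum
  have hdbl := sag_double τ K (fun j => ‖g j‖ ^ 2) (fun j => by positivity)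
  have h7 : (L * α) ^ 2 * τ * ∑ k ∈ Finset.Ico τ K, ∑ j ∈ Finset.Ico (k + 1 - τ) k, ‖g j‖ ^ 2
      ≤ 1 / 256 * ∑ j ∈ Finset.range K, ‖g j‖ ^ 2 := by
    calc _ ≤ (L * α) ^ 2 * τ * (τ * ∑ j ∈ Finset.range K, ‖g j‖ ^ 2) := by gcongr
      _ = (L * α * τ) ^ 2 * ∑ j ∈ Finset.range K, ‖g j‖ ^ 2 := by ring
      _ = _ := by rw [hLα]; norm_num
  rw [← Finset.sum_range_add_sum_Ico _ (by omega : τ ≤ K)] at h7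
  have h8 : ∑ j ∈ Finset.range τ, ‖g j‖ ^ 2 ≤ τ * (16 / 15 * (L * B)) ^ 2 := by
    calc _ ≤ ∑ j ∈ Finset.range τ, (16 / 15 * (L * B)) ^ 2 := by
          apply Finset.sum_le_sum
          intro j hj
          have := hg0 j (Finset.mem_range.1 hj)
          gcongr
      _ = _ := by simp
  have h9 : 0 ≤ ∑ j ∈ Finset.Ico τ K, ‖g j‖ ^ 2 := Finset.sum_nonneg (fun j _ => by positivity)
  have h10 : f (x τ) - f (x K) ≤ L * (16 / 15 * B) ^ 2 := by
    have := sag_descent f hfd L hL hs xstar (x τ)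
    rw [sag_grad_min f xstar hmin, inner_zero_left] at this
    have h11 : ‖x τ - xstar‖ ≤ 16 / 15 * B := (norm_sub_le _ _).trans (by linarith)
    have h12 : L * ‖x τ - xstar‖ ^ 2 ≤ L * (16 / 15 * B) ^ 2 := by gcongr
    linarith [hmin (x K)]
  have h13 : 2 / α = 32 * L * τ := by rw [hα]; field_simp; norm_num
  rw [h13] at hsum
  have h14 : 32 * L * τ * (f (x τ) - f (x K)) ≤ 32 * L * τ * (L * (16 / 15 * B) ^ 2) := by gcongr
  have h15 : 0 ≤ L ^ 2 * B ^ 2 * τ := by positivity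
  nlinarith

lemma sag_path (K : ℕ) (α : ℝ) (hα : 0 ≤ α) (x g : ℕ → E)
    (hx : ∀ k < K, x (k + 1) = x k - α • g k) (t k : ℕ) (htk : t ≤ k) (hk : k ≤ K) :
    ‖x t - x k‖ ≤ α * ∑ j ∈ Finset.Ico t k, ‖g j‖ := by
  induction k, htk using Nat.le_induction with
  | base => simp
  | succ n hn ih =>
    have h1 := ih (by omega)
    rw [Finset.sum_Ico_succ_top hn, hx n (by omega), mul_add]
    have : x t - (x n - α • g n) = (x t - x n) + α • g n := by abel
    rw [this]
    refine (norm_add_le _ _).trans ?_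
    rw [norm_smul, Real.norm_eq_abs, abs_of_nonneg hα]
    linarith

lemma sag_avg_norm {N : ℕ} (hN : 1 ≤ N) (v : Fin N → E) (C : ℝ) (hv : ∀ i, ‖v i‖ ≤ C) :
    ‖(N : ℝ)⁻¹ • ∑ i, v i‖ ≤ C := by
  have hNr : (0 : ℝ) < N := by positivity
  rw [norm_smul, norm_inv, Real.norm_natCast, inv_mul_le_iff₀ hNr]
  refine (norm_sum_le _ _).trans ((Finset.sum_le_sum (fun i _ => hv i)).trans ?_)
  simp

/-- The deterministic bound on the good event. -/
lemma sag_det {N : ℕ} (hN : 1 ≤ N) (L : ℝ) (hL : 0 < L)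
    (fi : Fin N → E → ℝ) (hdiff : ∀ i, Differentiable ℝ (fi i))
    (hsmooth : ∀ i x y, ‖gradient (fi i) x - gradient (fi i) y‖ ≤ L * ‖x - y‖)
    (f : E → ℝ) (hf : ∀ z, f z = (∑ i, fi i z) / N)
    (xstar : E) (hmin : ∀ y, f xstar ≤ f y)
    (xistar : Fin N → E) (hxi : ∀ i y, fi i (xistar i) ≤ fi i y)
    (B : ℝ) (hB : ‖xstar‖ ≤ B) (hBi : ∀ i, ‖xistar i‖ ≤ B)
    (K τ : ℕ) (hτ : 1 ≤ τ) (hK : 2 * τ ≤ K) (α : ℝ) (hα : α = 1 / (16 * L * τ))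
    (ω : Fin K → Fin N) (x g : ℕ → E) (h : Fin N → ℕ → E)
    (hx0 : x 0 = 0) (hh0 : ∀ i, h i 0 = 0)
    (hhrec : ∀ (i : Fin N) (k : ℕ) (hk : k < K),
      h i (k + 1) = if ω ⟨k, hk⟩ = i then gradient (fi i) (x k) else h i k)
    (hg : ∀ (k : ℕ) (hk : k < K),
      g k = (N : ℝ)⁻¹ • (∑ i, h i k)
        + (N : ℝ)⁻¹ • (gradient (fi (ω ⟨k, hk⟩)) (x k) - h (ω ⟨k, hk⟩) k))
    (hx : ∀ (k : ℕ), k < K → x (k + 1) = x k - α • g k)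
    (hgood : ∀ s, s < K → s + τ ≤ K → ∀ i, ∃ j : Fin K, s ≤ j.1 ∧ j.1 < s + τ ∧ ω j = i) :
    ∑ k ∈ Finset.Ico τ K, ‖gradient f (x k)‖ ^ 2 ≤ 384 * L ^ 2 * B ^ 2 * τ := by
  have hτr : (1 : ℝ) ≤ τ := by exact_mod_cast hτ
  have hα0 : 0 < α := by rw [hα]; positivity
  have hLα : L * α * τ = 1 / 16 := by rw [hα]; field_simp
  have hB0 : 0 ≤ B := (norm_nonneg _).trans hB
  have hNr : (0 : ℝ) < N := by positivity
  have hg' : ∀ k < K, g k = (N : ℝ)⁻¹ • ∑ i, h i (k + 1) := by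
    intro k hk
    rw [hg k hk, ← smul_add]
    congr 1
    have : ∀ i, h i (k + 1) = h i k + if ω ⟨k, hk⟩ = i then gradient (fi i) (x k) - h i k else 0 := by
      intro i
      rw [hhrec i k hk]
      split_ifs <;> simp
    rw [Finset.sum_congr rfl (fun i _ => this i), Finset.sum_add_distrib]
    simp
  have hold : ∀ k ≤ K, ∀ i, h i k = 0 ∨ ∃ t < k, h i k = gradient (fi i) (x t) := by
    intro k
    induction k with
    | zero => intro _ i; exact Or.inl (hh0 i)
    | succ k ih =>
      intro hk i
      rw [hhrec i k hk]
      split_ifs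
      · exact Or.inr ⟨k, by omega, rfl⟩
      · rcases ih (by omega) i with h1 | ⟨t, ht, h1⟩
        · exact Or.inl h1
        · exact Or.inr ⟨t, by omega, h1⟩
  have hrec : ∀ k ≤ K, ∀ s i, (∃ j : Fin K, s ≤ j.1 ∧ j.1 < k ∧ ω j = i) →
      ∃ t, s ≤ t ∧ t < k ∧ h i k = gradient (fi i) (x t) := by
    intro k
    induction k with
    | zero => rintro _ s i ⟨j, _, h2, _⟩; omega
    | succ k ih =>
      rintro hk s i ⟨j, h1, h2, h3⟩
      rw [hhrec i k hk]
      split_ifs with hi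
      · exact ⟨k, by omega, by omega, rfl⟩
      · have hjk : j.1 ≠ k := by
          intro hjk
          apply hi
          rw [← h3]
          congr 1
          exact Fin.ext hjk.symm
        obtain ⟨t, a, b, c⟩ := ih (by omega) s i ⟨j, h1, by omega, h3⟩
        exact ⟨t, a, by omega, c⟩
  -- early gradient bound
  have hgb : ∀ k < K, (∀ t ≤ k, ‖x t‖ ≤ B / 15) → ‖g k‖ ≤ 16 / 15 * (L * B) := by
    intro k hk hxt
    rw [hg' k hk]
    apply sag_avg_norm hN
    intro i
    rcases hold (k + 1) hk i with h1 | ⟨t, ht, h1⟩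
    · rw [h1, norm_zero]; positivity
    · rw [h1]
      have h2 := hsmooth i (x t) (xistar i)
      rw [sag_grad_min (fi i) _ (hxi i), sub_zero] at h2
      have h3 : ‖x t - xistar i‖ ≤ 16 / 15 * B :=
        (norm_sub_le _ _).trans (by linarith [hxt t (by omega), hBi i])
      calc _ ≤ L * ‖x t - xistar i‖ := h2
        _ ≤ L * (16 / 15 * B) := by gcongr
        _ = _ := by ring
  have hfrac : ∀ t : ℕ, t ≤ τ → (t : ℝ) / τ * (B / 15) ≤ B / 15 := by
    intro t ht
    have : (t : ℝ) / τ ≤ 1 := by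
      rw [div_le_one (by positivity)]; exact_mod_cast ht
    nlinarith
  have hxb : ∀ k ≤ τ, ∀ t ≤ k, ‖x t‖ ≤ (t : ℝ) / τ * (B / 15) := by
    intro k
    induction k with
    | zero => intro _ t ht; rw [Nat.le_zero.1 ht, hx0]; simp
    | succ k ih =>
      intro hk t ht
      rcases Nat.lt_or_ge t (k + 1) with h1 | h1
      · exact ih (by omega) t (by omega)
      · obtain rfl : t = k + 1 := by omega
        have h2 := hgb k (by omega) (fun t ht => (ih (by omega) t ht).trans (hfrac t (by omega)))
        rw [hx k (by omega)]
        refine (norm_sub_le _ _).trans ?_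
        rw [norm_smul, Real.norm_eq_abs, abs_of_pos hα0]
        have h3 := ih (by omega) k le_rfl
        have h4 : α * ‖g k‖ ≤ α * (16 / 15 * (L * B)) := by gcongr
        have h5 : α * (16 / 15 * (L * B)) = 1 / τ * (B / 15) := by
          rw [hα]; field_simp
        push_cast
        rw [add_div, add_mul]
        linarith
  have hxb' : ∀ t ≤ τ, ‖x t‖ ≤ B / 15 := fun t ht => (hxb τ le_rfl t ht).trans (hfrac t ht)
  have hfd : Differentiable ℝ f := by
    have : f = fun z => (∑ i, fi i z) / N := funext hf
    simp only [div_eq_inv_mul, ← smul_eq_mul] at this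
    rw [this]
    exact (Differentiable.fun_sum (fun i _ => hdiff i)).fun_const_smul _
  have hfs : ∀ x y, ‖gradient f x - gradient f y‖ ≤ L * ‖x - y‖ := by
    intro a b
    rw [sag_grad_avg fi hdiff f hf, sag_grad_avg fi hdiff f hf, ← smul_sub, ← Finset.sum_sub_distrib]
    exact sag_avg_norm hN _ _ (fun i => hsmooth i a b)
  refine sag_core f hfd L hL hfs xstar hmin B hB K τ hτ hK α hα x g hx
    (fun k hk => hgb k (by omega) (fun t ht => hxb' t (by omega))) (hxb' τ le_rfl) ?_
  intro k h1 h2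
  rw [sag_grad_avg fi hdiff f hf, hg' k h2, ← smul_sub, ← Finset.sum_sub_distrib]
  apply sag_avg_norm hN
  intro i
  obtain ⟨j, j1, j2, j3⟩ := hgood (k + 1 - τ) (by omega) (by omega) i
  obtain ⟨t, t1, t2, t3⟩ := hrec (k + 1) h2 (k + 1 - τ) i ⟨j, j1, by omega, j3⟩
  rw [t3]
  refine (hsmooth i _ _).trans ?_
  have h5 := sag_path K α hα0.le x g hx t k (by omega) h2.le
  have h6 : ∑ j ∈ Finset.Ico t k, ‖g j‖ ≤ ∑ j ∈ Finset.Ico (k + 1 - τ) k, ‖g j‖ :=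
    Finset.sum_le_sum_of_subset_of_nonneg (Finset.Ico_subset_Ico_left t1) (fun _ _ _ => norm_nonneg _)
  have h7 : α * ∑ j ∈ Finset.Ico t k, ‖g j‖ ≤ α * ∑ j ∈ Finset.Ico (k + 1 - τ) k, ‖g j‖ := by gcongr
  have h8 := h5.trans h7
  gcongr

end


/- STATEMENT 17 (SAG, non-convex case, high probability).
The i.i.d. uniform sampling sequence is modeled as `ω : Fin K → Fin N`, uniformly
distributed, so the probability of an event is its cardinality divided by `N ^ K`.
The trajectory `x ω`, direction `g ω`, and memory `h ω` are driven by the sample `ω`. -/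
open Classical in
theorem sag_nonconvex_high_prob (d N : ℕ) (hd : 1 ≤ d) (hN : 1 ≤ N)
    (L : ℝ) (hL : 0 < L)
    (fi : Fin N → EuclideanSpace ℝ (Fin d) → ℝ)
    (hdiff : ∀ i, Differentiable ℝ (fi i))
    (hsmooth : ∀ i x y, ‖gradient (fi i) x - gradient (fi i) y‖ ≤ L * ‖x - y‖)
    (f : EuclideanSpace ℝ (Fin d) → ℝ)
    (hf : ∀ z, f z = (∑ i, fi i z) / N)
    (xstar : EuclideanSpace ℝ (Fin d)) (hmin : ∀ y, f xstar ≤ f y)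
    (xistar : Fin N → EuclideanSpace ℝ (Fin d))
    (hxi : ∀ i y, fi i (xistar i) ≤ fi i y)
    (B : ℝ) (hB : B = max ‖xstar‖ (⨆ i, ‖xistar i‖))
    (K : ℕ) (hK1 : 1 ≤ K) (δ : ℝ) (hδ0 : 0 < δ) (hδ1 : δ < 1)
    (τ : ℕ) (hτ : τ = ⌈(8 * (N : ℝ) / 3) * Real.log ((N : ℝ) * K / δ)⌉₊)
    (α : ℝ) (hα : α = 1 / (16 * L * τ))
    (hKτ : 2 * τ ≤ K)
    (x g : (Fin K → Fin N) → ℕ → EuclideanSpace ℝ (Fin d))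
    (h : (Fin K → Fin N) → Fin N → ℕ → EuclideanSpace ℝ (Fin d))
    (hx0 : ∀ ω, x ω 0 = 0)
    (hh0 : ∀ ω i, h ω i 0 = 0)
    (hhrec : ∀ ω (i : Fin N) (k : ℕ) (hk : k < K),
      h ω i (k + 1) = if ω ⟨k, hk⟩ = i then gradient (fi i) (x ω k) else h ω i k)
    (hg : ∀ ω (k : ℕ) (hk : k < K),
      g ω k = (N : ℝ)⁻¹ • (∑ i, h ω i k)
        + (N : ℝ)⁻¹ • (gradient (fi (ω ⟨k, hk⟩)) (x ω k) - h ω (ω ⟨k, hk⟩) k))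
    (hxrec : ∀ ω (k : ℕ), k < K → x ω (k + 1) = x ω k - α • g ω k) :
    1 - δ ≤
      (Finset.univ.filter (fun ω : Fin K → Fin N =>
          ((K : ℝ) - τ)⁻¹ * ∑ k ∈ Finset.Ico τ K, ‖gradient f (x ω k)‖ ^ 2 ≤
            768 * L ^ 2 * B ^ 2 * τ / K)).card / (N : ℝ) ^ K := by
  have hNr : (1 : ℝ) ≤ N := by exact_mod_cast hN
  have hKr : (1 : ℝ) ≤ K := by exact_mod_cast hK1
  have hτ1 : 1 ≤ τ := by
    rw [hτ, Nat.one_le_ceil_iff]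
    have : 0 < Real.log ((N : ℝ) * K / δ) := by
      apply Real.log_pos
      rw [lt_div_iff₀ hδ0]; nlinarith
    positivity
  have hτr : (1 : ℝ) ≤ τ := by exact_mod_cast hτ1
  refine sag_prob N K τ hN hK1 δ hδ0 hδ1 hτ _ ?_
  intro ω hgood
  have hBx : ‖xstar‖ ≤ B := hB ▸ le_max_left _ _
  have hBi : ∀ i, ‖xistar i‖ ≤ B := fun i =>
    (le_ciSup (f := fun i => ‖xistar i‖) (Set.finite_range _).bddAbove i).trans
      (hB ▸ le_max_right _ _)
  have hmain := sag_det hN L hL fi hdiff hsmooth f hf xstar hmin xistar hxi B hBx hBi K τ hτ1 hKτ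
    α hα ω (x ω) (g ω) (h ω) (hx0 ω) (hh0 ω) (hhrec ω) (hg ω) (hxrec ω) hgood
  have hK2 : (2 : ℝ) * τ ≤ K := by exact_mod_cast hKτ
  have hpos : (0 : ℝ) < K - τ := by linarith
  rw [inv_mul_le_iff₀ hpos]
  refine hmain.trans ?_
  rw [mul_div_assoc', le_div_iff₀ (by linarith)]
  have : 0 ≤ L ^ 2 * B ^ 2 * τ := by positivity
  nlinarith
end

section
/- (IAG, non-convex case, deterministic.) Fix integers τ ≥ 1 and K ≥ 2τ, and set α = 1/(16 L τ). If the (deterministic) sampling sequence has staleness bounded by τ up to horizon K, then, without any convexity assumption on f, the IAG iterates (driven by the SAG direction) satisfy (1/(K − τ)) · Σ_{k=τ}^{K−1} ‖∇f(x_k)‖² ≤ 768 L² B² τ / K. -/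
lemma descent_aux {E : Type*} [NormedAddCommGroup E] [InnerProductSpace ℝ E] [CompleteSpace E]
    (f : E → ℝ) (hf : Differentiable ℝ f) (L : ℝ)
    (hs : ∀ x y, ‖gradient f x - gradient f y‖ ≤ L * ‖x - y‖) (x v : E) :
    f (x + v) ≤ f x + inner ℝ (gradient f x) v + L / 2 * ‖v‖ ^ 2 := by
  have hder : ∀ t : ℝ, HasDerivAt (fun t : ℝ => f (x + t • v) - t * inner ℝ (gradient f x) v
      - L / 2 * ‖v‖ ^ 2 * t ^ 2)
      (inner ℝ (gradient f (x + t • v)) v - inner ℝ (gradient f x) v - L * ‖v‖ ^ 2 * t) t := by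
    intro t
    have h1 : HasDerivAt (fun t : ℝ => x + t • v) v t := by
      simpa using ((hasDerivAt_id t).smul_const v).const_add x
    have h2 : HasFDerivAt f (innerSL ℝ (gradient f (x + t • v))) (x + t • v) := by
      have := ((hf (x + t • v)).hasGradientAt).hasFDerivAt
      exact this
    have h3 := h2.comp_hasDerivAt t h1
    have h4 := (hasDerivAt_id t).mul_const (inner ℝ (gradient f x) v)
    have h5 := ((hasDerivAt_id t).pow 2).const_mul (L / 2 * ‖v‖ ^ 2)
    have h6 := (h3.sub h4).sub h5
    refine HasDerivAt.congr_deriv h6 ?_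
    simp only [innerSL_apply_apply, id]
    push_cast
    ring
  have hanti : AntitoneOn (fun t : ℝ => f (x + t • v) - t * inner ℝ (gradient f x) v
      - L / 2 * ‖v‖ ^ 2 * t ^ 2) (Set.Icc 0 1) := by
    apply antitoneOn_of_deriv_nonpos (convex_Icc 0 1)
    · exact fun t _ => (hder t).continuousAt.continuousWithinAt
    · exact fun t _ => (hder t).differentiableAt.differentiableWithinAt
    · intro t ht
      rw [(hder t).deriv]
      rw [interior_Icc] at ht
      have h1 : inner ℝ (gradient f (x + t • v) - gradient f x) v ≤
        ‖gradient f (x + t • v) - gradient f x‖ * ‖v‖ := real_inner_le_norm _ _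
      have h2 := hs (x + t • v) x
      rw [add_sub_cancel_left, norm_smul, Real.norm_eq_abs, abs_of_pos ht.1] at h2
      rw [inner_sub_left] at h1
      nlinarith [mul_le_mul_of_nonneg_right h2 (norm_nonneg v)]
  have := hanti (Set.left_mem_Icc.2 zero_le_one) (Set.right_mem_Icc.2 zero_le_one) zero_le_one
  simp only [one_smul, zero_smul, add_zero, one_mul, zero_mul, one_pow] at this
  linarith

lemma grad_min_zero {E : Type*} [NormedAddCommGroup E] [InnerProductSpace ℝ E] [CompleteSpace E]
    (f : E → ℝ) (x : E) (hx : ∀ y, f x ≤ f y) : gradient f x = 0 := by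
  have : IsLocalMin f x := Filter.Eventually.of_forall hx
  simp [gradient, this.fderiv_eq_zero]

lemma window_sum (a : ℕ → ℝ) (ha : ∀ k, 0 ≤ a k) (τ K : ℕ) (hK : τ ≤ K) :
    ∑ k ∈ Finset.Ico τ K, ∑ j ∈ Finset.Ico (k - τ) k, a j ≤ τ * ∑ j ∈ Finset.range K, a j := by
  have h1 : ∑ k ∈ Finset.Ico τ K, ∑ j ∈ Finset.Ico (k - τ) k, a j
      = ∑ m ∈ Finset.range τ, ∑ n ∈ Finset.range (K - τ), a (n + m) := by
    rw [Finset.sum_comm, Finset.sum_Ico_eq_sum_range]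
    apply Finset.sum_congr rfl
    intro n _
    rw [Finset.sum_Ico_eq_sum_range]
    simp
  rw [h1]
  have h2 : ∀ m ∈ Finset.range τ, ∑ n ∈ Finset.range (K - τ), a (n + m) ≤
      ∑ j ∈ Finset.range K, a j := by
    intro m hm
    rw [Finset.mem_range] at hm
    have : ∑ n ∈ Finset.range (K - τ), a (n + m) = ∑ j ∈ Finset.Ico m (K - τ + m), a j := by
      rw [Finset.sum_Ico_eq_sum_range]
      simp [add_comm]
    rw [this]
    apply Finset.sum_le_sum_of_subset_of_nonneg
    · intro j hj
      simp at hj ⊢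
      omega
    · intros; exact ha _
  calc _ ≤ ∑ m ∈ Finset.range τ, ∑ j ∈ Finset.range K, a j := Finset.sum_le_sum h2
    _ = _ := by simp

lemma avg_norm_le {E : Type*} [NormedAddCommGroup E] [InnerProductSpace ℝ E]
    (N : ℕ) (hN : 1 ≤ N) (u : Fin N → E) (C : ℝ) (hu : ∀ i, ‖u i‖ ≤ C) :
    ‖(N : ℝ)⁻¹ • ∑ i, u i‖ ≤ C := by
  have hN' : (0 : ℝ) < N := by exact_mod_cast hN
  rw [norm_smul, norm_inv, Real.norm_natCast]
  have : ‖∑ i, u i‖ ≤ N * C := by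
    refine (norm_sum_le _ _).trans ((Finset.sum_le_sum fun i _ => hu i).trans ?_)
    simp
  rw [inv_mul_le_iff₀ hN']
  exact this


/- STATEMENT 18 (IAG, non-convex case, deterministic). -/
theorem iag_nonconvex (d N : ℕ) (hd : 1 ≤ d) (hN : 1 ≤ N)
    (L : ℝ) (hL : 0 < L)
    (fi : Fin N → EuclideanSpace ℝ (Fin d) → ℝ)
    (hdiff : ∀ i, Differentiable ℝ (fi i))
    (hsmooth : ∀ i x y, ‖gradient (fi i) x - gradient (fi i) y‖ ≤ L * ‖x - y‖)
    (f : EuclideanSpace ℝ (Fin d) → ℝ)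
    (hf : ∀ z, f z = (∑ i, fi i z) / N)
    (xstar : EuclideanSpace ℝ (Fin d)) (hmin : ∀ y, f xstar ≤ f y)
    (xistar : Fin N → EuclideanSpace ℝ (Fin d))
    (hxi : ∀ i y, fi i (xistar i) ≤ fi i y)
    (B : ℝ) (hB : B = max ‖xstar‖ (⨆ i, ‖xistar i‖))
    (τ K : ℕ) (hτ : 1 ≤ τ) (hK : 2 * τ ≤ K)
    (idx : ℕ → Fin N) (α : ℝ) (hα : α = 1 / (16 * L * τ))
    (x g : ℕ → EuclideanSpace ℝ (Fin d))
    (h : Fin N → ℕ → EuclideanSpace ℝ (Fin d))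
    (hx0 : x 0 = 0)
    (hh0 : ∀ i, h i 0 = 0)
    (hhrec : ∀ i k, h i (k + 1) = if idx k = i then gradient (fi i) (x k) else h i k)
    (hg : ∀ k, g k = (N : ℝ)⁻¹ • (∑ i, h i k)
      + (N : ℝ)⁻¹ • (gradient (fi (idx k)) (x k) - h (idx k) k))
    (hxrec : ∀ k, x (k + 1) = x k - α • g k)
    (hstale : ∀ i : Fin N, ∀ k : ℕ, τ ≤ k → k ≤ K - 1 →
      ∃ j : ℕ, k - τ ≤ j ∧ j < k ∧ idx j = i) :
    ((K : ℝ) - τ)⁻¹ * ∑ k ∈ Finset.Ico τ K, ‖gradient f (x k)‖ ^ 2 ≤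
      768 * L ^ 2 * B ^ 2 * τ / K := by
  have hN' : (0 : ℝ) < N := by exact_mod_cast hN
  have hτ' : (1 : ℝ) ≤ τ := by exact_mod_cast hτ
  have hτ0 : (0 : ℝ) < τ := by linarith
  have hKr : (2 : ℝ) * τ ≤ K := by exact_mod_cast hK
  have hα0 : 0 < α := by rw [hα]; positivity
  have hαL : α * L * τ = 1 / 16 := by rw [hα]; field_simp
  have hαL1 : α * L ≤ 1 / 16 := by
    nlinarith [mul_pos hα0 hL]
  have hB1 : ‖xstar‖ ≤ B := hB ▸ le_max_left _ _
  have hB0 : 0 ≤ B := (norm_nonneg _).trans hB1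
  have hB2 : ∀ i, ‖xistar i‖ ≤ B := fun i => by
    rw [hB]
    exact (le_ciSup (f := fun i => ‖xistar i‖) (Set.finite_range _).bddAbove i).trans
      (le_max_right _ _)
  -- gradient of f
  have hfd : ∀ z, HasGradientAt f ((N : ℝ)⁻¹ • ∑ i, gradient (fi i) z) z := by
    intro z
    have h1 : f = fun z => (N : ℝ)⁻¹ * ∑ i, fi i z := by
      funext z; rw [hf]; field_simp
    have h2 : HasFDerivAt (fun z => ∑ i, fi i z)
        (∑ i, (InnerProductSpace.toDual ℝ _ (gradient (fi i) z))) z :=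
      HasFDerivAt.fun_sum fun i _ => ((hdiff i z).hasGradientAt).hasFDerivAt
    rw [hasGradientAt_iff_hasFDerivAt, h1]
    have h3 := h2.const_mul (N : ℝ)⁻¹
    refine h3.congr_fderiv ?_
    ext w
    simp [map_sum]
  have hgf : ∀ z, gradient f z = (N : ℝ)⁻¹ • ∑ i, gradient (fi i) z := fun z => (hfd z).gradient
  have hfdiff : Differentiable ℝ f := fun z => (hfd z).differentiableAt
  have hfs : ∀ y z, ‖gradient f y - gradient f z‖ ≤ L * ‖y - z‖ := by
    intro y z
    rw [hgf, hgf, ← smul_sub, ← Finset.sum_sub_distrib]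
    exact avg_norm_le N hN _ _ fun i => hsmooth i y z
  -- direction
  have hg' : ∀ k, g k = (N : ℝ)⁻¹ • ∑ i, h i (k + 1) := by
    intro k
    rw [hg, ← smul_add]
    congr 1
    have : ∀ i, h i (k + 1) = h i k +
        if idx k = i then gradient (fi i) (x k) - h i k else 0 := by
      intro i
      rw [hhrec]
      split_ifs <;> simp
    simp_rw [this]
    rw [Finset.sum_add_distrib]
    simp
  have hrep : ∀ k i, h i k = 0 ∨ ∃ j, j < k ∧ h i k = gradient (fi i) (x j) := by
    intro k i
    induction k with
    | zero => exact Or.inl (hh0 i)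
    | succ k ih =>
      rw [hhrec]
      split_ifs
      · exact Or.inr ⟨k, by omega, rfl⟩
      · rcases ih with ih | ⟨j, hj, ih⟩
        · exact Or.inl ih
        · exact Or.inr ⟨j, by omega, ih⟩
  have hrep2 : ∀ i j k, j < k → idx j = i →
      ∃ j', j ≤ j' ∧ j' < k ∧ h i k = gradient (fi i) (x j') := by
    intro i j k hjk hj
    induction k with
    | zero => omega
    | succ k ih =>
      rw [hhrec]
      split_ifs with hc
      · exact ⟨k, by omega, by omega, rfl⟩
      · have : j ≠ k := by rintro rfl; exact hc hj
        obtain ⟨j', h1, h2, h3⟩ := ih (by omega)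
        exact ⟨j', h1, by omega, h3⟩
  have hrep3 : ∀ i k, τ ≤ k → k < K →
      ∃ j, k - τ ≤ j ∧ j ≤ k ∧ h i (k + 1) = gradient (fi i) (x j) := by
    intro i k hk hkK
    obtain ⟨j, h1, h2, h3⟩ := hstale i k hk (by omega)
    obtain ⟨j', h4, h5, h6⟩ := hrep2 i j (k + 1) (by omega) h3
    exact ⟨j', by omega, by omega, h6⟩
  have hgi : ∀ i z, ‖gradient (fi i) z‖ ≤ L * (‖z‖ + B) := by
    intro i z
    have h1 := hsmooth i z (xistar i)
    rw [grad_min_zero (fi i) (xistar i) (hxi i), sub_zero] at h1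
    refine h1.trans (mul_le_mul_of_nonneg_left ?_ hL.le)
    exact (norm_sub_le _ _).trans (by linarith [hB2 i])
  -- phase 1
  have hgb : ∀ k, (∀ j, j ≤ k → ‖x j‖ ≤ B) → ‖g k‖ ≤ 2 * L * B := by
    intro k hk
    rw [hg']
    apply avg_norm_le N hN
    intro i
    rcases hrep (k + 1) i with h1 | ⟨j, hj, h1⟩
    · rw [h1, norm_zero]; positivity
    · rw [h1]
      refine (hgi i _).trans ?_
      nlinarith [hk j (by omega)]
  have hxb : ∀ k, k ≤ τ → ∀ j, j ≤ k → ‖x j‖ ≤ 2 * α * L * B * j := by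
    intro k
    induction k with
    | zero =>
      intro _ j hj
      have : j = 0 := by omega
      subst this
      simp [hx0]
    | succ k ih =>
      intro hk j hj
      have ih' := ih (by omega)
      rcases Nat.lt_or_ge j (k + 1) with hlt | hge
      · exact ih' j (by omega)
      · have : j = k + 1 := by omega
        subst this
        have hb : ‖g k‖ ≤ 2 * L * B := by
          apply hgb
          intro j hj
          have hjτ : (j : ℝ) ≤ τ := by exact_mod_cast (by omega : j ≤ τ)
          have h1 := ih' j hj
          have h2 : 2 * α * L * B * j ≤ 2 * α * L * B * τ := by gcongr
          have h3 : 2 * α * L * B * τ = B * (1 / 8) := by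
            linear_combination 2 * B * hαL
          linarith
        rw [hxrec]
        refine (norm_sub_le _ _).trans ?_
        rw [norm_smul, Real.norm_eq_abs, abs_of_pos hα0]
        have h1 := ih' k le_rfl
        have h2 := mul_le_mul_of_nonneg_left hb hα0.le
        push_cast
        linarith
  have hxB : ∀ j, j ≤ τ → ‖x j‖ ≤ B := by
    intro j hj
    have h1 := hxb τ le_rfl j hj
    have hjτ : (j : ℝ) ≤ τ := by exact_mod_cast hj
    have h2 : 2 * α * L * B * j ≤ 2 * α * L * B * τ := by gcongr
    have h3 : 2 * α * L * B * τ = B * (1 / 8) := by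
      linear_combination 2 * B * hαL
    linarith
  have hgB : ∀ k, k < τ → ‖g k‖ ^ 2 ≤ 4 * L ^ 2 * B ^ 2 := by
    intro k hk
    have h1 := hgb k fun j hj => hxB j (by omega)
    have h2 := pow_le_pow_left₀ (norm_nonneg _) h1 2
    linarith [h2, (by ring : (2 * L * B) ^ 2 = 4 * L ^ 2 * B ^ 2)]
  have hΔ : f (x τ) - f xstar ≤ 2 * L * B ^ 2 := by
    have h1 := descent_aux f hfdiff L hfs xstar (x τ - xstar)
    rw [grad_min_zero f xstar hmin, inner_zero_left, add_sub_cancel] at h1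
    have h2 : ‖x τ - xstar‖ ≤ 2 * B := (norm_sub_le _ _).trans (by linarith [hxB τ le_rfl])
    have h3 := pow_le_pow_left₀ (norm_nonneg _) h2 2
    nlinarith
  -- phase 2
  have herr : ∀ k, τ ≤ k → k < K → ‖g k - gradient f (x k)‖ ^ 2 ≤
      (L * α) ^ 2 * (τ * ∑ j ∈ Finset.Ico (k - τ) k, ‖g j‖ ^ 2) := by
    intro k hk hkK
    have h1 : ‖g k - gradient f (x k)‖ ≤ (L * α) * ∑ j ∈ Finset.Ico (k - τ) k, ‖g j‖ := by
      rw [hg', hgf, ← smul_sub, ← Finset.sum_sub_distrib]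
      apply avg_norm_le N hN
      intro i
      obtain ⟨j, hj1, hj2, hj3⟩ := hrep3 i k hk hkK
      rw [hj3, mul_assoc]
      refine (hsmooth i _ _).trans (mul_le_mul_of_nonneg_left ?_ hL.le)
      rw [← dist_eq_norm]
      refine (dist_le_Ico_sum_dist x hj2).trans ?_
      rw [Finset.mul_sum]
      have h2 : ∀ l, dist (x l) (x (l + 1)) = α * ‖g l‖ := by
        intro l
        rw [hxrec, dist_eq_norm, sub_sub_cancel, norm_smul, Real.norm_eq_abs, abs_of_pos hα0]
      simp_rw [h2]
      apply Finset.sum_le_sum_of_subset_of_nonneg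
      · exact Finset.Ico_subset_Ico_left hj1
      · intros; positivity
    have h2 := pow_le_pow_left₀ (norm_nonneg _) h1 2
    rw [mul_pow] at h2
    refine h2.trans (mul_le_mul_of_nonneg_left ?_ (by positivity))
    have h3 := sq_sum_le_card_mul_sum_sq (s := Finset.Ico (k - τ) k) (f := fun j => ‖g j‖)
    rw [Nat.card_Ico, Nat.sub_sub_self hk] at h3
    exact h3
  have hstep : ∀ k, τ ≤ k → k < K → α / 2 * ‖gradient f (x k)‖ ^ 2 ≤
      (f (x k) - f (x (k + 1))) - α / 2 * (15 / 16) * ‖g k‖ ^ 2 +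
      α / 2 * ((L * α) ^ 2 * (τ * ∑ j ∈ Finset.Ico (k - τ) k, ‖g j‖ ^ 2)) := by
    intro k hk hkK
    have h1 := descent_aux f hfdiff L hfs (x k) (-(α • g k))
    rw [← sub_eq_add_neg, ← hxrec, inner_neg_right, inner_smul_right, norm_neg, norm_smul,
      Real.norm_eq_abs, abs_of_pos hα0] at h1
    have h2 := norm_sub_sq_real (g k) (gradient f (x k))
    rw [real_inner_comm] at h2
    have h3 := mul_le_mul_of_nonneg_left (herr k hk hkK) (by positivity : 0 ≤ α / 2)
    have h4 : L / 2 * (α * ‖g k‖) ^ 2 ≤ α / 2 * (1 / 16) * ‖g k‖ ^ 2 := by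
      have : L / 2 * (α * ‖g k‖) ^ 2 = (α * L) * (α / 2 * ‖g k‖ ^ 2) := by ring
      rw [this]
      have := mul_le_mul_of_nonneg_right hαL1 (by positivity : 0 ≤ α / 2 * ‖g k‖ ^ 2)
      linarith
    rw [h2] at h3
    linarith
  have hsum := Finset.sum_le_sum fun k (hk : k ∈ Finset.Ico τ K) =>
    hstep k (Finset.mem_Ico.1 hk).1 (Finset.mem_Ico.1 hk).2
  rw [Finset.sum_add_distrib, Finset.sum_sub_distrib] at hsum
  simp_rw [← Finset.mul_sum] at hsum
  have htel : ∑ k ∈ Finset.Ico τ K, (f (x k) - f (x (k + 1))) = f (x τ) - f (x K) := by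
    have h1 := Finset.sum_Ico_sub (fun k => f (x k)) (by omega : τ ≤ K)
    rw [← neg_sub (f (x K)), ← h1, ← Finset.sum_neg_distrib]
    simp
  rw [htel] at hsum
  have hw := window_sum (fun k => ‖g k‖ ^ 2) (fun k => by positivity) τ K (by omega)
  rw [← Finset.sum_range_add_sum_Ico _ (by omega : τ ≤ K)] at hw
  have hpre : ∑ k ∈ Finset.range τ, ‖g k‖ ^ 2 ≤ τ * (4 * L ^ 2 * B ^ 2) := by
    refine (Finset.sum_le_sum fun k hk => hgB k (Finset.mem_range.1 hk)).trans ?_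
    simp
  have hG0 : 0 ≤ ∑ k ∈ Finset.Ico τ K, ‖g k‖ ^ 2 := Finset.sum_nonneg fun _ _ => by positivity
  have hfK := hmin (x K)
  set G := ∑ k ∈ Finset.Ico τ K, ‖g k‖ ^ 2
  set P := ∑ k ∈ Finset.range τ, ‖g k‖ ^ 2
  set W := ∑ k ∈ Finset.Ico τ K, ∑ j ∈ Finset.Ico (k - τ) k, ‖g j‖ ^ 2
  set S := ∑ k ∈ Finset.Ico τ K, ‖gradient f (x k)‖ ^ 2
  have hW : (L * α) ^ 2 * (τ * W) ≤ 1 / 256 * (P + G) := by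
    have h1 : (L * α) ^ 2 * (τ * W) ≤ (L * α) ^ 2 * (τ * (τ * (P + G))) := by gcongr
    have h2 : (L * α) ^ 2 * (τ * (τ * (P + G))) = (α * L * τ) ^ 2 * (P + G) := by ring
    rw [h2, hαL] at h1
    linarith
  have hS1 : α / 2 * S ≤ 2 * L * B ^ 2 + α / 2 * (1 / 256 * (τ * (4 * L ^ 2 * B ^ 2))) := by
    have h1 := mul_le_mul_of_nonneg_left hW (by positivity : 0 ≤ α / 2)
    have h2 := mul_le_mul_of_nonneg_left hpre (by positivity : 0 ≤ α / 2)
    have h3 := mul_nonneg (by positivity : 0 ≤ α / 2) hG0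
    linarith
  have hS : S ≤ 65 * τ * L ^ 2 * B ^ 2 := by
    have h1 : 2 * L * B ^ 2 = α / 2 * (64 * τ * L ^ 2 * B ^ 2) := by
      linear_combination (-32 * L * B ^ 2) * hαL
    rw [h1, ← mul_add] at hS1
    have h2 := le_of_mul_le_mul_left hS1 (by positivity)
    have h3 : 0 ≤ τ * L ^ 2 * B ^ 2 := by positivity
    linarith
  have hK0 : (0 : ℝ) < K := by linarith
  have hKτ : (0 : ℝ) < K - τ := by linarith
  rw [inv_mul_le_iff₀ hKτ]
  refine hS.trans ?_
  rw [← mul_div_assoc, le_div_iff₀ hK0]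
  have h3 : 0 ≤ τ * L ^ 2 * B ^ 2 := by positivity
  nlinarith [mul_nonneg h3 hK0.le, mul_nonneg h3 (by linarith : (0:ℝ) ≤ K - 2 * τ)]
end
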